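/- The spectral Fejér kernel is a good kernel: K_{m_Λ} ≥ 0, ∫_{T^d} K_{m_Λ} = 1, and for every δ > 0, ∫_{T^d \ B_δ(0)} K_{m_Λ}(x) dx → 0 as Λ → ∞. -/

import Mathlib

open MeasureTheory Filter

noncomputable instance : Fact ((0 : ℝ) < 2 * Real.pi) := ⟨by positivity⟩

/-- The `d`-torus `ℝ^d / 2πℤ^d`. -/
abbrev Torus (d : ℕ) := Fin d → AddCircle (2 * Real.pi)

/-- Euclidean norm of a lattice point in `ℤ^d`. -/
noncomputable def euclNormZ {d : ℕ} (n : Fin d → ℤ) : ℝ :=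
  Real.sqrt (∑ i, ((n i : ℝ)) ^ 2)

/-- The character `e^{i n·x}` on the torus. -/
noncomputable def torusChar {d : ℕ} (n : Fin d → ℤ) (x : Torus d) : ℂ :=
  ∏ i, ((AddCircle.toCircle ((n i) • (x i)) : Circle) : ℂ)

lemma torusChar_zero {d : ℕ} (x : Torus d) : torusChar 0 x = 1 := by
  simp [torusChar]

lemma torusChar_add {d : ℕ} (m n : Fin d → ℤ) (x : Torus d) :
    torusChar (m + n) x = torusChar m x * torusChar n x := by
  simp [torusChar, add_smul, AddCircle.toCircle_add, Finset.prod_mul_distrib]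

lemma torusChar_add_arg {d : ℕ} (n : Fin d → ℤ) (x y : Torus d) :
    torusChar n (x + y) = torusChar n x * torusChar n y := by
  simp [torusChar, smul_add, AddCircle.toCircle_add, Finset.prod_mul_distrib]

lemma torusChar_conj {d : ℕ} (n : Fin d → ℤ) (x : Torus d) :
    (starRingEnd ℂ) (torusChar n x) = torusChar (-n) x := by
  unfold torusChar
  rw [map_prod]
  refine Finset.prod_congr rfl fun i _ => ?_
  rw [Pi.neg_apply, neg_smul, AddCircle.toCircle_neg, Circle.coe_inv_eq_conj]

lemma torusChar_single {d : ℕ} (i : Fin d) (x : Torus d) :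
    torusChar (Pi.single i 1) x = (AddCircle.toCircle (x i) : ℂ) := by
  unfold torusChar
  rw [Finset.prod_eq_single i]
  · simp
  · intro j _ hj
    simp [hj]
  · simp

lemma torusChar_continuous {d : ℕ} (n : Fin d → ℤ) : Continuous (torusChar n) := by
  unfold torusChar
  refine continuous_finsetProd _ fun i _ => ?_
  exact continuous_subtype_val.comp (AddCircle.continuous_toCircle.comp
    ((continuous_zsmul (n i)).comp (continuous_apply i)))

lemma torusChar_exists {d : ℕ} (n : Fin d → ℤ) (hn : n ≠ 0) :
    ∃ y : Torus d, torusChar n y = -1 := by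
  obtain ⟨i, hi⟩ := Function.ne_iff.mp hn
  have hi' : (n i : ℝ) ≠ 0 := by exact_mod_cast hi
  refine ⟨Pi.single i ((Real.pi / n i : ℝ) : AddCircle (2 * Real.pi)), ?_⟩
  unfold torusChar
  rw [Finset.prod_eq_single i]
  · rw [Pi.single_eq_same, ← AddCircle.coe_zsmul, AddCircle.toCircle_apply_mk, zsmul_eq_mul,
      mul_div_cancel₀ _ hi', div_self (by positivity), one_mul, Circle.coe_exp, Complex.exp_pi_mul_I]
  · intro j _ hj
    simp [hj]
  · simp

lemma integrable_of_cont {d : ℕ} {E : Type*} [NormedAddCommGroup E]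
    (μ : Measure (Torus d)) [IsProbabilityMeasure μ]
    {f : Torus d → E} [SecondCountableTopologyEither (Torus d) E]
    (hf : Continuous f) : Integrable f μ := by
  rw [← integrableOn_univ]
  exact hf.continuousOn.integrableOn_compact isCompact_univ

lemma integral_torusChar {d : ℕ} (μ : Measure (Torus d)) [μ.IsAddHaarMeasure]
    [IsProbabilityMeasure μ] (n : Fin d → ℤ) :
    ∫ x, torusChar n x ∂μ = if n = 0 then 1 else 0 := by
  split_ifs with h
  · subst h
    simp [torusChar_zero]
  · obtain ⟨y, hy⟩ := torusChar_exists n h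
    have h1 := integral_add_right_eq_self (μ := μ) (torusChar n) y
    simp only [torusChar_add_arg, hy] at h1
    rw [integral_mul_const] at h1
    have h2 : (2 : ℂ) * ∫ x, torusChar n x ∂μ = 0 := by linear_combination -h1
    simpa using h2

lemma integral_D {d : ℕ} (μ : Measure (Torus d)) [μ.IsAddHaarMeasure]
    [IsProbabilityMeasure μ] (S : Finset (Fin d → ℤ)) (n : Fin d → ℤ) :
    ∫ x, ((Complex.normSq (∑ k ∈ S, torusChar k x) : ℝ) : ℂ) * torusChar n x ∂μ
      = ((S.filter (fun k => k + n ∈ S)).card : ℂ) := by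
  have h : ∀ x : Torus d, ((Complex.normSq (∑ k ∈ S, torusChar k x) : ℝ) : ℂ) * torusChar n x
      = ∑ k ∈ S, ∑ l ∈ S, torusChar (k + n + -l) x := by
    intro x
    rw [← Complex.mul_conj, map_sum, Finset.sum_mul_sum, Finset.sum_mul]
    refine Finset.sum_congr rfl fun k _ => ?_
    rw [Finset.sum_mul]
    refine Finset.sum_congr rfl fun l _ => ?_
    rw [torusChar_conj, torusChar_add, torusChar_add]
    ring
  simp_rw [h]
  have hi : ∀ m : Fin d → ℤ, Integrable (torusChar m) μ :=
    fun m => integrable_of_cont μ (torusChar_continuous m)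
  rw [integral_finsetSum _ (fun k _ => integrable_finsetSum _ fun l _ => hi _)]
  rw [Finset.card_filter]
  push_cast
  refine Finset.sum_congr rfl fun k _ => ?_
  rw [integral_finsetSum _ (fun l _ => hi _)]
  simp_rw [integral_torusChar, ← sub_eq_add_neg, sub_eq_zero]
  simp

lemma euclNormZ_le {d : ℕ} (n : Fin d → ℤ) {Λ : ℝ} (hΛ : 0 ≤ Λ) :
    euclNormZ n ≤ Λ ↔ ∑ i, ((n i : ℝ)) ^ 2 ≤ Λ ^ 2 := by
  unfold euclNormZ
  rw [Real.sqrt_le_left hΛ]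

lemma card_S_ge {d : ℕ} (hd : 0 < d) {Λ : ℝ} (hΛ : 1 ≤ Λ) (S : Finset (Fin d → ℤ))
    (hS : ∀ n, n ∈ S ↔ euclNormZ n ≤ Λ) : (Λ / d) ^ d ≤ (S.card : ℝ) := by
  have hd1 : (1 : ℝ) ≤ d := by exact_mod_cast hd
  set N : ℕ := ⌊Λ / d⌋₊ with hN
  have hN1 : (N : ℝ) ≤ Λ / d := Nat.floor_le (by positivity)
  have hN2 : Λ / d < N + 1 := Nat.lt_floor_add_one _
  have hsub : Fintype.piFinset (fun _ : Fin d => Finset.Icc (-(N : ℤ)) N) ⊆ S := by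
    intro k hk
    rw [Fintype.mem_piFinset] at hk
    rw [hS, euclNormZ_le _ (by linarith)]
    calc ∑ i, ((k i : ℝ)) ^ 2 ≤ ∑ i : Fin d, (Λ / d) ^ 2 := by
          refine Finset.sum_le_sum fun i _ => ?_
          have := Finset.mem_Icc.mp (hk i)
          have h1 : (-(N : ℝ)) ≤ k i := by exact_mod_cast this.1
          have h2 : (k i : ℝ) ≤ N := by exact_mod_cast this.2
          exact sq_le_sq' (by linarith) (by linarith)
      _ = Λ ^ 2 / d := by simp; field_simp
      _ ≤ Λ ^ 2 := div_le_self (by positivity) hd1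
  have hc := Finset.card_le_card hsub
  rw [Fintype.card_piFinset] at hc
  have hcard : (Finset.Icc (-(N : ℤ)) N).card = 2 * N + 1 := by
    rw [Int.card_Icc]; omega
  simp only [hcard, Finset.prod_const, Finset.card_univ, Fintype.card_fin] at hc
  calc (Λ / d) ^ d ≤ ((2 * N + 1 : ℕ) : ℝ) ^ d := by
        gcongr
        push_cast
        have : (0 : ℝ) ≤ N := by positivity
        linarith
    _ ≤ S.card := by exact_mod_cast hc

lemma card_A_le {d : ℕ} (i : Fin d) {Λ : ℝ} (hΛ : 1 ≤ Λ) (S : Finset (Fin d → ℤ))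
    (hS : ∀ n, n ∈ S ↔ euclNormZ n ≤ Λ) :
    ((S.filter (fun k => ¬ k + Pi.single i 1 ∈ S)).card : ℝ) ≤ (3 * Λ) ^ (d - 1) := by
  have h0 : 0 ≤ Λ := by linarith
  set N : ℕ := ⌊Λ⌋₊ with hN
  have hN1 : (N : ℝ) ≤ Λ := Nat.floor_le h0
  have hS' : ∀ n, n ∈ S ↔ ∑ j, ((n j : ℝ)) ^ 2 ≤ Λ ^ 2 := fun n => by
    rw [hS, euclNormZ_le _ h0]
  let T : Finset (Fin d → ℤ) := Fintype.piFinset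
    (fun j : Fin d => if j = i then {0} else Finset.Icc (-(N : ℤ)) N)
  have hT : T.card = (2 * N + 1) ^ (d - 1) := by
    have hcard : (Finset.Icc (-(N : ℤ)) N).card = 2 * N + 1 := by
      rw [Int.card_Icc]; omega
    simp only [T, Fintype.card_piFinset, apply_ite Finset.card, hcard, Finset.card_singleton]
    rw [Finset.prod_ite]
    simp [Finset.filter_ne', Finset.card_erase_of_mem]
  have key : ∀ k ∈ S, k + Pi.single i 1 ∉ S → ∀ l ∈ S,
      (∀ j, j ≠ i → k j = l j) → l i ≤ k i := by
    intro k hk hk' l hl hkl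
    by_contra hlt
    push Not at hlt
    apply hk'
    rw [hS'] at hk hl ⊢
    rw [← Finset.add_sum_erase _ _ (Finset.mem_univ i)] at hk hl ⊢
    have e1 : ∑ j ∈ Finset.univ.erase i, ((l j : ℝ)) ^ 2
        = ∑ j ∈ Finset.univ.erase i, ((k j : ℝ)) ^ 2 :=
      Finset.sum_congr rfl fun j hj => by rw [hkl j (Finset.ne_of_mem_erase hj)]
    have e2 : ∑ j ∈ Finset.univ.erase i, (((k + Pi.single i 1 : Fin d → ℤ) j : ℝ)) ^ 2
        = ∑ j ∈ Finset.univ.erase i, ((k j : ℝ)) ^ 2 :=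
      Finset.sum_congr rfl fun j hj => by simp [Finset.ne_of_mem_erase hj]
    rw [e1] at hl
    rw [e2]
    have h1 : ((k i : ℝ)) + 1 ≤ l i := by exact_mod_cast hlt
    simp only [Pi.add_apply, Pi.single_eq_same, Int.cast_add, Int.cast_one]
    by_cases hc : (0 : ℝ) ≤ k i + 1
    · nlinarith
    · nlinarith
  have hle : (S.filter (fun k => ¬ k + Pi.single i 1 ∈ S)).card ≤ T.card := by
    refine Finset.card_le_card_of_injOn (fun k => Function.update k i 0) ?_ ?_
    · intro k hk
      have hkS := (Finset.mem_filter.mp hk).1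
      rw [hS'] at hkS
      refine Finset.mem_coe.mpr (Fintype.mem_piFinset.mpr fun j => ?_)
      by_cases hj : j = i
      · subst hj; simp
      · have h1 : ((k j : ℝ)) ^ 2 ≤ Λ ^ 2 :=
          (Finset.single_le_sum (f := fun j => ((k j : ℝ)) ^ 2)
            (fun _ _ => sq_nonneg _) (Finset.mem_univ j)).trans hkS
        have h2 : |(k j : ℝ)| ≤ Λ := abs_le_of_sq_le_sq h1 h0
        have h3 : (k j).natAbs ≤ N := by
          apply Nat.le_floor
          rw [Nat.cast_natAbs]
          exact_mod_cast h2
        simp only [hj, if_false, Function.update_of_ne hj, ne_eq, not_false_eq_true,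
          Finset.mem_Icc]
        omega
    · intro k hk l hl hkl
      obtain ⟨hk1, hk2⟩ := Finset.mem_filter.mp hk
      obtain ⟨hl1, hl2⟩ := Finset.mem_filter.mp hl
      have hj : ∀ j, j ≠ i → k j = l j := fun j hj => by
        have := congrFun hkl j
        simpa [Function.update_of_ne hj] using this
      funext j
      by_cases h : j = i
      · subst h
        exact le_antisymm (key l hl1 hl2 k hk1 fun j' h' => (hj j' h').symm)
          (key k hk1 hk2 l hl1 hj)
      · exact hj j h
  rw [hT] at hle
  calc _ ≤ (((2 * N + 1) ^ (d - 1) : ℕ) : ℝ) := by exact_mod_cast hle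
    _ = (2 * (N : ℝ) + 1) ^ (d - 1) := by push_cast; rfl
    _ ≤ _ := by gcongr; linarith

lemma integral_one_sub {d : ℕ} (μ : Measure (Torus d)) [μ.IsAddHaarMeasure]
    [IsProbabilityMeasure μ] (S : Finset (Fin d → ℤ)) (n : Fin d → ℤ) :
    ∫ x, Complex.normSq (∑ k ∈ S, torusChar k x) * (1 - (torusChar n x).re) ∂μ
      = ((S.filter (fun k => ¬ k + n ∈ S)).card : ℝ) := by
  have hc : Continuous fun x : Torus d => Complex.normSq (∑ k ∈ S, torusChar k x) :=
    Complex.continuous_normSq.comp (continuous_finsetSum _ fun k _ => torusChar_continuous k)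
  have hn := torusChar_continuous n
  have h1 : ∫ x, Complex.normSq (∑ k ∈ S, torusChar k x) * (torusChar n x).re ∂μ
      = ((S.filter (fun k => k + n ∈ S)).card : ℝ) := by
    have := congrArg Complex.re (integral_D μ S n)
    rw [Complex.natCast_re] at this
    rw [← this]
    have hint : Integrable (fun x : Torus d =>
        ((Complex.normSq (∑ k ∈ S, torusChar k x) : ℝ) : ℂ) * torusChar n x) μ :=
      integrable_of_cont μ ((Complex.continuous_ofReal.comp hc).mul hn)
    have h2 := integral_re hint
    simp only [RCLike.re_eq_complex_re, Complex.re_ofReal_mul] at h2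
    exact h2
  have h0 : ∫ x, Complex.normSq (∑ k ∈ S, torusChar k x) ∂μ = (S.card : ℝ) := by
    have := integral_D μ S 0
    simp only [torusChar_zero, mul_one, add_zero, Finset.filter_mem_eq_inter,
      Finset.inter_self] at this
    rw [integral_complex_ofReal] at this
    exact_mod_cast this
  simp_rw [mul_sub, mul_one]
  have hi2 : Integrable (fun x : Torus d =>
      Complex.normSq (∑ k ∈ S, torusChar k x) * (torusChar n x).re) μ :=
    integrable_of_cont μ (hc.mul (Complex.continuous_re.comp hn))
  rw [integral_sub (integrable_of_cont μ hc) hi2, h0, h1]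
  rw [← Finset.card_filter_add_card_filter_not (s := S) (fun k => k + n ∈ S)]
  push_cast
  ring

lemma integral_normSq {d : ℕ} (μ : Measure (Torus d)) [μ.IsAddHaarMeasure]
    [IsProbabilityMeasure μ] (S : Finset (Fin d → ℤ)) :
    ∫ x, Complex.normSq (∑ k ∈ S, torusChar k x) ∂μ = (S.card : ℝ) := by
  have := integral_D μ S 0
  simp only [torusChar_zero, mul_one, add_zero, Finset.filter_mem_eq_inter,
    Finset.inter_self] at this
  rw [integral_complex_ofReal] at this
  exact_mod_cast this

lemma re_torusChar_single_le {d : ℕ} (i : Fin d) (x : Torus d) :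
    (torusChar (Pi.single i 1) x).re ≤ 1 := by
  rw [torusChar_single]
  exact (Complex.re_le_norm _).trans (Circle.norm_coe _).le

lemma eq_zero_of_re {d : ℕ} (i : Fin d) (x : Torus d)
    (h : (torusChar (Pi.single i 1) x).re = 1) : x i = 0 := by
  rw [torusChar_single] at h
  have hn : Complex.normSq (AddCircle.toCircle (x i) : ℂ) = 1 := by simp
  rw [Complex.normSq_apply, h] at hn
  have him : (AddCircle.toCircle (x i) : ℂ).im = 0 := by nlinarith
  apply AddCircle.injective_toCircle (T := 2 * Real.pi) (by positivity)
  rw [AddCircle.toCircle_zero]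
  apply Circle.ext
  apply Complex.ext <;> simp [h, him]

/-- The spectral Fejér kernel
`K_{m_Λ}(x) = (1/N_B(Λ)) |Σ_{k ∈ B̄_Λ^ℤ} e^{i k·x}|²` is a good kernel:
it is nonnegative, has total mass one, and its mass outside any fixed ball
around `0` tends to `0` as `Λ → ∞`. -/
theorem stmt_5 (d : ℕ)
    (μ : Measure (Torus d)) [μ.IsAddHaarMeasure] [IsProbabilityMeasure μ]
    (S : ℝ → Finset (Fin d → ℤ)) (hS : ∀ Λ n, n ∈ S Λ ↔ euclNormZ n ≤ Λ)
    (K : ℝ → Torus d → ℝ)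
    (hK : ∀ Λ x, K Λ x = (1 / ((S Λ).card : ℝ)) * Complex.normSq (∑ k ∈ S Λ, torusChar k x)) :
    (∀ Λ : ℝ, ∀ x : Torus d, 0 ≤ K Λ x) ∧
      (∀ Λ : ℝ, 0 < Λ → ∫ x, K Λ x ∂μ = 1) ∧
      (∀ δ : ℝ, 0 < δ →
        Tendsto (fun Λ : ℝ => ∫ x in {x : Torus d | δ ≤ dist x 0}, K Λ x ∂μ)
          atTop (nhds 0)) := by
  have hpos : ∀ Λ : ℝ, ∀ x : Torus d, 0 ≤ K Λ x := fun Λ x => by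
    rw [hK]
    exact mul_nonneg (by positivity) (Complex.normSq_nonneg _)
  refine ⟨hpos, ?_, ?_⟩
  · intro Λ hΛ
    have h0 : (0 : Fin d → ℤ) ∈ S Λ := by
      rw [hS, euclNormZ_le _ hΛ.le]
      simp [sq_nonneg]
    have hc : ((S Λ).card : ℝ) ≠ 0 := by
      exact_mod_cast Finset.card_ne_zero_of_mem h0
    simp_rw [hK]
    rw [integral_const_mul, integral_normSq, one_div, inv_mul_cancel₀ hc]
  · intro δ hδ
    set E : Set (Torus d) := {x : Torus d | δ ≤ dist x 0} with hE
    have hEc : IsClosed E := isClosed_le continuous_const (continuous_id.dist continuous_const)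
    let g : Torus d → ℝ := fun x => ∑ i, (1 - (torusChar (Pi.single i 1) x).re)
    have hg : Continuous g := continuous_finsetSum _ fun i _ =>
      continuous_const.sub (Complex.continuous_re.comp (torusChar_continuous _))
    have hg0 : ∀ x, 0 ≤ g x := fun x => Finset.sum_nonneg fun i _ =>
      sub_nonneg.mpr (re_torusChar_single_le i x)
    have hgE : ∀ x ∈ E, 0 < g x := by
      intro x hx
      refine lt_of_le_of_ne (hg0 x) fun h => ?_
      have h1 := (Finset.sum_eq_zero_iff_of_nonneg (fun i _ =>
        sub_nonneg.mpr (re_torusChar_single_le i x))).mp h.symm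
      have hx0 : x = 0 := by
        funext i
        exact eq_zero_of_re i x (by linarith [h1 i (Finset.mem_univ i)])
      rw [hx0] at hx
      simp [hE] at hx
      linarith
    obtain ⟨c, hc, hcE⟩ := hEc.isCompact.exists_forall_le' hg.continuousOn hgE
    have hKc : ∀ Λ, Continuous (K Λ) := fun Λ => by
      rw [funext (hK Λ)]
      exact continuous_const.mul (Complex.continuous_normSq.comp
        (continuous_finsetSum _ fun k _ => torusChar_continuous k))
    have hbound : ∀ Λ, ∫ x in E, K Λ x ∂μ ≤ c⁻¹ * ∑ i : Fin d,
        (1 / ((S Λ).card : ℝ)) *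
          (((S Λ).filter (fun k => ¬ k + Pi.single i 1 ∈ S Λ)).card : ℝ) := by
      intro Λ
      have hI : Integrable (fun x => c⁻¹ * (K Λ x * g x)) μ :=
        integrable_of_cont μ (continuous_const.mul ((hKc Λ).mul hg))
      calc ∫ x in E, K Λ x ∂μ ≤ ∫ x in E, c⁻¹ * (K Λ x * g x) ∂μ := by
            refine setIntegral_mono_on (integrable_of_cont μ (hKc Λ)).integrableOn
              hI.integrableOn hEc.measurableSet fun x hx => ?_
            rw [inv_mul_eq_div, le_div_iff₀ hc]
            exact mul_le_mul_of_nonneg_left (hcE x hx) (hpos Λ x)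
        _ ≤ ∫ x, c⁻¹ * (K Λ x * g x) ∂μ :=
            setIntegral_le_integral hI (Eventually.of_forall fun x =>
              mul_nonneg (inv_nonneg.mpr hc.le) (mul_nonneg (hpos Λ x) (hg0 x)))
        _ = _ := by
            rw [integral_const_mul]
            congr 1
            simp only [g, Finset.mul_sum]
            have hi3 : ∀ i : Fin d, Integrable (fun x : Torus d =>
                K Λ x * (1 - (torusChar (Pi.single i 1) x).re)) μ := fun i =>
              integrable_of_cont μ ((hKc Λ).mul
                (continuous_const.sub (Complex.continuous_re.comp (torusChar_continuous _))))
            rw [integral_finsetSum _ fun i _ => hi3 i]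
            refine Finset.sum_congr rfl fun i _ => ?_
            simp_rw [hK, mul_assoc]
            rw [integral_const_mul, integral_one_sub]
    have hb2 : ∀ Λ : ℝ, 1 ≤ Λ → ∫ x in E, K Λ x ∂μ ≤
        (c⁻¹ * ∑ _i : Fin d, (3 : ℝ) ^ (d - 1) * (d : ℝ) ^ d) * Λ⁻¹ := by
      intro Λ hΛ
      refine (hbound Λ).trans ?_
      rw [mul_assoc, Finset.sum_mul]
      refine mul_le_mul_of_nonneg_left (Finset.sum_le_sum fun i _ => ?_) (inv_nonneg.mpr hc.le)
      have hd : 0 < d := i.pos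
      have hd' : (0 : ℝ) < d := by exact_mod_cast hd
      have hA := card_A_le i hΛ (S Λ) (hS Λ)
      have hB := card_S_ge hd hΛ (S Λ) (hS Λ)
      have hp : 0 < (Λ / d) ^ d := by positivity
      rw [one_div, inv_mul_eq_div]
      calc _ ≤ (3 * Λ) ^ (d - 1) / (Λ / d) ^ d := by gcongr
        _ = _ := by
          obtain ⟨e, rfl⟩ : ∃ e, d = e + 1 := ⟨d - 1, by omega⟩
          rw [Nat.add_sub_cancel, mul_pow, div_pow, pow_succ Λ]
          field_simp
    refine tendsto_of_tendsto_of_tendsto_of_le_of_le' tendsto_const_nhds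
      (h := fun Λ : ℝ => (c⁻¹ * ∑ _i : Fin d, (3 : ℝ) ^ (d - 1) * (d : ℝ) ^ d) * Λ⁻¹) ?_
      (Eventually.of_forall fun Λ => integral_nonneg fun x => hpos Λ x)
      ((eventually_ge_atTop 1).mono hb2)
    simpa using tendsto_inv_atTop_zero.const_mul
      (c⁻¹ * ∑ _i : Fin d, (3 : ℝ) ^ (d - 1) * (d : ℝ) ^ d)
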